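/- For all nonnegative integers N, p(⌊3N/2⌋ - 1, 3, N) - p(⌊3N/2⌋ - 2, 3, N) equals 0 if N ≡ 0 (mod 4) and 1 if N ≡ 1, 2, or 3 (mod 4). -/

import Mathlib

/-- `pBdd n m N` is the number of partitions of `n` into at most `m` parts,
each part at most `N`; it is `0` for negative `n`. -/
noncomputable def pBdd (n : ℤ) (m N : ℕ) : ℕ :=
  if 0 ≤ n then
    Nat.card {π : Nat.Partition n.toNat //
      Multiset.card π.parts ≤ m ∧ ∀ i ∈ π.parts, i ≤ N}
  else 0

/-- `pAtMost n m` is the number of partitions of `n` into at most `m` parts;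
it is `0` for negative `n`. -/
noncomputable def pAtMost (n : ℤ) (m : ℕ) : ℕ :=
  if 0 ≤ n then
    Nat.card {π : Nat.Partition n.toNat // Multiset.card π.parts ≤ m}
  else 0

/-!
Pad a partition with zeros to a weakly decreasing list of length exactly `m ≥ 2`. Adding one to the
first entry is a bijection from the lists of sum `n` whose first entry is not `N` to the lists of
sum `n + 1` whose first two entries differ. So consecutive values of `p(·, m, N)` differ by the
number of ties at the top in sum `n + 1` minus the number of lists of sum `n` starting with `N`.
For `m = 3` and `n < 2 * N` both exceptional families are parametrized by an interval, which gives
`p(n + 1, 3, N) - p(n, 3, N) = ⌊(n + 1) / 2⌋ - ⌊n / 3⌋ - ⌊(n + 2 - N) / 2⌋`, the last term being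
`0` for `n + 2 < N`.
-/

theorem pBdd_of_neg {n : ℤ} (hn : n < 0) (m N : ℕ) : pBdd n m N = 0 :=
  if_neg hn.not_ge

theorem pBdd_zero (m N : ℕ) : pBdd 0 m N = 1 := by
  simp [pBdd]

theorem filter_ne_add_replicate_card_sub {α : Type*} [DecidableEq α] (s : Multiset α) (a : α) :
    s.filter (· ≠ a) + Multiset.replicate (s.card - (s.filter (· ≠ a)).card) a = s := by
  have hsplit : s.filter (· ≠ a) + Multiset.replicate (s.count a) a = s := by
    rw [← Multiset.filter_eq', add_comm, Multiset.filter_add_not]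
  have hcard : s.card - (s.filter (· ≠ a)).card = s.count a := by
    have := congrArg Multiset.card hsplit
    rw [Multiset.card_add, Multiset.card_replicate] at this
    omega
  rw [hcard, hsplit]

/-- The partitions of `n` into at most `m` parts, each at most `N`, encoded as weakly decreasing
lists padded with zeros to length exactly `m`. -/
def paddedPartitions (n m N : ℕ) : Set (List ℕ) :=
  {l | l.length = m ∧ l.SortedGE ∧ (∀ i ∈ l, i ≤ N) ∧ l.sum = n}

namespace paddedPartitions

theorem sort_add_replicate_mem {n m N : ℕ} (π : n.Partition) (hcard : π.parts.card ≤ m)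
    (hN : ∀ i ∈ π.parts, i ≤ N) :
    (π.parts + Multiset.replicate (m - π.parts.card) 0).sort (· ≥ ·) ∈ paddedPartitions n m N := by
  refine ⟨?_, (Multiset.pairwise_sort _ _).sortedGE, fun i hi => ?_, ?_⟩
  · simp [hcard]
  · rw [Multiset.mem_sort, Multiset.mem_add] at hi
    rcases hi with hi | hi
    · exact hN i hi
    · simp [Multiset.eq_of_mem_replicate hi]
  · rw [← Multiset.sum_coe, Multiset.sort_eq]
    simp [π.parts_sum]

/-- Padding with zeros and sorting, as a bijection from partitions to `paddedPartitions`; its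
inverse discards the zeros. -/
def partitionEquiv (n m N : ℕ) :
    {π : n.Partition // π.parts.card ≤ m ∧ ∀ i ∈ π.parts, i ≤ N} ≃ paddedPartitions n m N where
  toFun π := ⟨_, sort_add_replicate_mem π.1 π.2.1 π.2.2⟩
  invFun l := ⟨.ofSums n l.1 ((Multiset.sum_coe _).trans l.2.2.2.2),
    (Multiset.card_le_card (Multiset.filter_le (· ≠ 0) (l.1 : Multiset ℕ))).trans_eq l.2.1,
    fun i hi => l.2.2.2.1 i (Multiset.mem_coe.1 (Multiset.mem_of_mem_filter hi))⟩
  left_inv := by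
    rintro ⟨π, -⟩
    ext1
    apply Nat.Partition.ext
    have hpos : π.parts.filter (· ≠ 0) = π.parts :=
      Multiset.filter_eq_self.2 fun i hi => (π.parts_pos hi).ne'
    have hzero (k : ℕ) : (Multiset.replicate k 0).filter (· ≠ 0) = 0 :=
      Multiset.filter_eq_nil.2 fun i hi => by simp [Multiset.eq_of_mem_replicate hi]
    simp only [Nat.Partition.ofSums, Multiset.sort_eq, Multiset.filter_add, hpos, hzero, add_zero]
  right_inv := by
    rintro ⟨l, rfl, hsorted, -⟩
    ext1
    dsimp only
    refine List.Perm.eq_of_sortedGE (Multiset.pairwise_sort _ _).sortedGE hsorted ?_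
    rw [← Multiset.coe_eq_coe, Multiset.sort_eq]
    exact filter_ne_add_replicate_card_sub (l : Multiset ℕ) 0

protected theorem finite (n m N : ℕ) : (paddedPartitions n m N).Finite :=
  Finite.of_equiv _ (partitionEquiv n m N)

theorem cons_cons_mem_iff {n m N a b : ℕ} {t : List ℕ} :
    a :: b :: t ∈ paddedPartitions n (m + 2) N ↔
      b ≤ a ∧ a ≤ N ∧ a + (b :: t).sum = n ∧ t.length = m ∧ (b :: t).SortedGE := by
  simp only [paddedPartitions, Set.mem_ofPred_eq, List.length_cons, List.sortedGE_iff_pairwise,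
    List.pairwise_cons, List.forall_mem_cons, List.sum_cons, Nat.add_right_cancel_iff]
  constructor
  · rintro ⟨ht, ⟨⟨hba, -⟩, hsorted⟩, ⟨haN, -⟩, hsum⟩
    exact ⟨hba, haN, hsum, ht, hsorted⟩
  · rintro ⟨hba, haN, hsum, ht, hsorted⟩
    have hta : ∀ i ∈ t, i ≤ a := fun i hi => (hsorted.1 i hi).trans hba
    exact ⟨ht, ⟨⟨hba, hta⟩, hsorted⟩, ⟨haN, hba.trans haN, fun i hi => (hta i hi).trans haN⟩, hsum⟩

theorem triple_mem_iff {n N a b c : ℕ} :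
    [a, b, c] ∈ paddedPartitions n 3 N ↔ c ≤ b ∧ b ≤ a ∧ a ≤ N ∧ a + b + c = n := by
  simp only [cons_cons_mem_iff, List.sortedGE_iff_isChain, List.isChain_pair, List.sum_cons,
    List.sum_nil, List.length_singleton, true_and]
  omega

theorem exists_eq_cons_cons {n m N : ℕ} {l : List ℕ} (hl : l ∈ paddedPartitions n (m + 2) N) :
    ∃ a b t, l = a :: b :: t := by
  match l, hl.1 with
  | a :: b :: t, _ => exact ⟨a, b, t, rfl⟩

theorem image_modifyHead_succ (n m N : ℕ) :
    List.modifyHead (· + 1) '' {l ∈ paddedPartitions n (m + 2) N | l[0]? ≠ some N} =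
      {l ∈ paddedPartitions (n + 1) (m + 2) N | l[0]? ≠ l[1]?} := by
  ext l
  constructor
  · rintro ⟨l, ⟨hl, hne⟩, rfl⟩
    obtain ⟨a, b, t, rfl⟩ := exists_eq_cons_cons hl
    obtain ⟨hba, haN, hsum, htail⟩ := cons_cons_mem_iff.1 hl
    have ha : a ≠ N := fun h => hne (congrArg some h)
    have hab : a + 1 ≠ b := by omega
    exact ⟨(cons_cons_mem_iff (a := a + 1)).2 ⟨by omega, by omega, by omega, htail⟩,
      fun h => hab (Option.some.inj h)⟩
  · rintro ⟨hl, hne⟩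
    obtain ⟨a, b, t, rfl⟩ := exists_eq_cons_cons hl
    obtain ⟨hba, haN, hsum, htail⟩ := cons_cons_mem_iff.1 hl
    have hab : a ≠ b := fun h => hne (congrArg some h)
    have haN' : a - 1 ≠ N := by omega
    refine ⟨(a - 1) :: b :: t, ⟨cons_cons_mem_iff.2 ⟨by omega, by omega, by omega, htail⟩,
      fun h => haN' (Option.some.inj h)⟩, ?_⟩
    rw [List.modifyHead_cons, Nat.sub_add_cancel (by omega)]

theorem ncard_triple_head_eq {n N : ℕ} (hn : n ≤ 2 * N) :
    {l ∈ paddedPartitions n 3 N | l[0]? = some N}.ncard = (n + 2 - N) / 2 := by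
  have himage : {l ∈ paddedPartitions n 3 N | l[0]? = some N} =
      (fun c => [N, n - N - c, c]) '' Finset.range ((n + 2 - N) / 2) := by
    ext l
    constructor
    · rintro ⟨hl, hhead⟩
      obtain ⟨a, b, c, rfl⟩ := List.length_eq_three.1 hl.1
      obtain rfl : a = N := Option.some.inj hhead
      obtain ⟨hcb, hba, -, hsum⟩ := triple_mem_iff.1 hl
      obtain rfl : b = n - a - c := by omega
      exact ⟨c, Finset.mem_coe.2 (Finset.mem_range.2 (by omega)), rfl⟩
    · rintro ⟨c, hc, rfl⟩
      have hc' := Finset.mem_range.1 (Finset.mem_coe.1 hc)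
      exact ⟨triple_mem_iff.2 (by omega), rfl⟩
  have hinj : Function.Injective fun c => [N, n - N - c, c] := fun c c' h => by simp_all
  rw [himage, Set.ncard_image_of_injective _ hinj, Set.ncard_coe_finset, Finset.card_range]

theorem ncard_triple_tie {n N : ℕ} (hn : n ≤ 2 * N) :
    {l ∈ paddedPartitions n 3 N | l[0]? = l[1]?}.ncard = n / 2 + 1 - (n + 2) / 3 := by
  have himage : {l ∈ paddedPartitions n 3 N | l[0]? = l[1]?} =
      (fun a => [a, a, n - 2 * a]) '' Finset.Icc ((n + 2) / 3) (n / 2) := by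
    ext l
    constructor
    · rintro ⟨hl, htie⟩
      obtain ⟨a, b, c, rfl⟩ := List.length_eq_three.1 hl.1
      obtain rfl : a = b := Option.some.inj htie
      obtain ⟨hca, -, -, hsum⟩ := triple_mem_iff.1 hl
      obtain rfl : c = n - 2 * a := by omega
      exact ⟨a, Finset.mem_coe.2 (Finset.mem_Icc.2 (by omega)), rfl⟩
    · rintro ⟨a, ha, rfl⟩
      have ha' := Finset.mem_Icc.1 (Finset.mem_coe.1 ha)
      exact ⟨triple_mem_iff.2 (by omega), rfl⟩
  have hinj : Function.Injective fun a => [a, a, n - 2 * a] := fun a a' h => by simp_all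
  rw [himage, Set.ncard_image_of_injective _ hinj, Set.ncard_coe_finset, Nat.card_Icc]

end paddedPartitions

theorem pBdd_natCast (n m N : ℕ) : pBdd n m N = (paddedPartitions n m N).ncard :=
  (if_pos n.cast_nonneg).trans (Nat.card_congr (paddedPartitions.partitionEquiv n m N))

theorem pBdd_succ_add_ncard_head_eq (n m N : ℕ) :
    pBdd (n + 1) (m + 2) N + {l ∈ paddedPartitions n (m + 2) N | l[0]? = some N}.ncard =
      pBdd n (m + 2) N + {l ∈ paddedPartitions (n + 1) (m + 2) N | l[0]? = l[1]?}.ncard := by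
  have hinj : Function.Injective (List.modifyHead (· + 1 : ℕ → ℕ)) :=
    Function.LeftInverse.injective (g := List.modifyHead (· - 1)) fun l => by cases l <;> simp
  have hcompl : {l ∈ paddedPartitions n (m + 2) N | l[0]? ≠ some N}.ncard =
      {l ∈ paddedPartitions (n + 1) (m + 2) N | l[0]? ≠ l[1]?}.ncard := by
    rw [← paddedPartitions.image_modifyHead_succ, Set.ncard_image_of_injective _ hinj]
  have hhead : {l ∈ paddedPartitions n (m + 2) N | l[0]? = some N}.ncard +
      {l ∈ paddedPartitions n (m + 2) N | l[0]? ≠ some N}.ncard = _ :=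
    Set.ncard_inter_add_ncard_sdiff_eq_ncard _ {l | l[0]? = some N} (paddedPartitions.finite ..)
  have htie : {l ∈ paddedPartitions (n + 1) (m + 2) N | l[0]? = l[1]?}.ncard +
      {l ∈ paddedPartitions (n + 1) (m + 2) N | l[0]? ≠ l[1]?}.ncard = _ :=
    Set.ncard_inter_add_ncard_sdiff_eq_ncard _ {l | l[0]? = l[1]?} (paddedPartitions.finite ..)
  rw [← Nat.cast_add_one, pBdd_natCast, pBdd_natCast]
  omega

theorem pBdd_three_succ_add {n N : ℕ} (hn : n < 2 * N) :
    pBdd (n + 1) 3 N + n / 3 + (n + 2 - N) / 2 = pBdd n 3 N + (n + 1) / 2 := by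
  have hstep : pBdd (n + 1) 3 N + _ = pBdd n 3 N + _ := pBdd_succ_add_ncard_head_eq n 1 N
  rw [paddedPartitions.ncard_triple_head_eq hn.le, paddedPartitions.ncard_triple_tie hn] at hstep
  omega

theorem stmt11 (N : ℕ) :
    (pBdd (((3 * N / 2 : ℕ) : ℤ) - 1) 3 N : ℤ) - pBdd (((3 * N / 2 : ℕ) : ℤ) - 2) 3 N =
      if N % 4 = 0 then 0 else 1 := by
  match N with
  | 0 => simp [pBdd_of_neg]
  | 1 => simp [pBdd_of_neg, pBdd_zero]
  | N + 2 =>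
    obtain ⟨n, hn⟩ : ∃ n, 3 * (N + 2) / 2 = n + 2 := ⟨3 * (N + 2) / 2 - 2, by omega⟩
    have hstep := pBdd_three_succ_add (n := n) (N := N + 2) (by omega)
    have h₁ : ((n + 2 : ℕ) : ℤ) - 1 = n + 1 := by omega
    have h₂ : ((n + 2 : ℕ) : ℤ) - 2 = n := by omega
    rw [hn, h₁, h₂]
    split_ifs <;> omega
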